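/- Let Δ be the bicyclic graph built as follows: take two vertices t and r joined by three internally disjoint paths S₁: t–a₁–⋯–a_n–r, S₂: t–b₁–⋯–b_n–r, and S₃ of length ℓ ≥ 1 with no trees attached at its internal vertices; attach a rooted tree T_i at a_i and a rooted tree Λ_i at b_i for 1 ≤ i ≤ n, a rooted tree Υ at t and a rooted tree Θ at r. Assume T_i ≅ Λ_i as rooted trees for each i, that Υ is not isomorphic to Θ as a rooted tree, and that ℓ ≠ n+1 or at least one T_i has more than one vertex. Set G_i = Aut(T_i)_{root}, H = Aut(Υ)_{root}, K = Aut(Θ)_{root}. Then Aut(Δ) ≅ H × K × ((G₁ × G₂ × ⋯ × G_n) ≀ Z₂). -/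

import Mathlib

open SimpleGraph

/-- The stabilizer `Aut(G)_v = {f ∈ Aut(G) : f(v) = v}` of a vertex `v` in the automorphism
group of a graph `G`. -/
def autStab {V : Type} (G : SimpleGraph V) (v : V) : Subgroup (G ≃g G) where
  carrier := {f | f v = v}
  one_mem' := rfl
  mul_mem' := by
    intro f g hf hg
    simp only [Set.mem_setOf_eq] at *
    show f (g v) = v
    rw [hg, hf]
  inv_mem' := by
    intro f hf
    simp only [Set.mem_setOf_eq] at *
    calc f⁻¹ v = f⁻¹ (f v) := by rw [hf]
    _ = v := RelIso.inv_apply_self f v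

/-- The swap action of `Z₂` on `G × G`. -/
def swapHom (G : Type) [Group G] : Multiplicative (ZMod 2) →* MulAut (G × G) where
  toFun g := if Multiplicative.toAdd g = 1 then (MulEquiv.prodComm : G × G ≃* G × G) else 1
  map_one' := by
    show (if (0 : ZMod 2) = 1 then (MulEquiv.prodComm : G × G ≃* G × G) else 1) = 1
    norm_num
  map_mul' x y := by
    have h2 : ∀ z : ZMod 2, z = 0 ∨ z = 1 := by decide
    have hs : (MulEquiv.prodComm : G × G ≃* G × G) * MulEquiv.prodComm = 1 := by
      ext z <;> rfl
    show (if Multiplicative.toAdd x + Multiplicative.toAdd y = 1 then _ else _) = _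
    rcases h2 (Multiplicative.toAdd x) with hx | hx <;>
      rcases h2 (Multiplicative.toAdd y) with hy | hy <;>
        simp [hx, hy, hs, show (1 + 1 : ZMod 2) = 0 from rfl,
          show (0 : ZMod 2) ≠ 1 by decide, show (1 : ZMod 2) ≠ 0 by decide]

/-- The wreath product `G ≀ Z₂ = (G × G) ⋊ Z₂`, where the nontrivial element of `Z₂`
swaps the two coordinates. -/
def wreathZ2 (G : Type) [Group G] : Type :=
  (G × G) ⋊[swapHom G] Multiplicative (ZMod 2)

instance (G : Type) [Group G] : Group (wreathZ2 G) :=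
  inferInstanceAs (Group ((G × G) ⋊[swapHom G] Multiplicative (ZMod 2)))

/-- The graph obtained from `base` by attaching, for each `i : ι`, the rooted tree
`(T i, t i)` at the vertex `x i` (identifying the root `t i` with `x i`); the attached trees
are pairwise disjoint and disjoint from `base` except at the attachment vertices. -/
def attachTrees {B : Type} (base : SimpleGraph B) {ι : Type} {W : ι → Type}
    (T : ∀ i, SimpleGraph (W i)) (t : ∀ i, W i) (x : ι → B) :
    SimpleGraph (B ⊕ Σ i, {w : W i // w ≠ t i}) where
  Adj a b :=
    match a, b with
    | .inl a, .inl b => base.Adj a b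
    | .inl a, .inr ⟨i, w⟩ => a = x i ∧ (T i).Adj (t i) w.1
    | .inr ⟨i, w⟩, .inl b => b = x i ∧ (T i).Adj (t i) w.1
    | .inr ⟨i, w⟩, .inr ⟨j, w'⟩ => ∃ h : i = j, (T j).Adj (h ▸ w).1 w'.1
  symm := by
    refine ⟨?_⟩
    rintro (a | ⟨i, w⟩) (b | ⟨j, w'⟩) h
    · exact base.symm.symm _ _ h
    · exact h
    · exact h
    · obtain ⟨rfl, hw⟩ := h
      exact ⟨rfl, (T i).symm.symm _ _ hw⟩
  loopless := by
    refine ⟨?_⟩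
    rintro (a | ⟨i, w⟩) h
    · exact base.loopless.irrefl a h
    · obtain ⟨h', hw⟩ := h
      exact (T i).loopless.irrefl _ hw

/-- Vertices of a theta graph: two hub vertices `u`, `v` joined by three internally disjoint
paths having `p`, `q` and `r` internal vertices respectively. -/
inductive ThetaV (p q r : ℕ) : Type where
  | u : ThetaV p q r
  | v : ThetaV p q r
  | x1 : Fin p → ThetaV p q r
  | x2 : Fin q → ThetaV p q r
  | x3 : Fin r → ThetaV p q r
  deriving DecidableEq

/-- The theta graph: the vertices `u` and `v` joined by three internally disjoint paths of
lengths `p + 1`, `q + 1` and `r + 1`; the internal vertices of each path are indexed starting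
from the end adjacent to `v`. -/
def theta (p q r : ℕ) : SimpleGraph (ThetaV p q r) where
  Adj a b :=
    match a, b with
    | .u, .v => p = 0 ∨ q = 0 ∨ r = 0
    | .v, .u => p = 0 ∨ q = 0 ∨ r = 0
    | .v, .x1 i => i.val = 0
    | .x1 i, .v => i.val = 0
    | .u, .x1 i => i.val = p - 1
    | .x1 i, .u => i.val = p - 1
    | .v, .x2 i => i.val = 0
    | .x2 i, .v => i.val = 0
    | .u, .x2 i => i.val = q - 1
    | .x2 i, .u => i.val = q - 1
    | .v, .x3 i => i.val = 0
    | .x3 i, .v => i.val = 0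
    | .u, .x3 i => i.val = r - 1
    | .x3 i, .u => i.val = r - 1
    | .x1 i, .x1 j => i.val + 1 = j.val ∨ j.val + 1 = i.val
    | .x2 i, .x2 j => i.val + 1 = j.val ∨ j.val + 1 = i.val
    | .x3 i, .x3 j => i.val + 1 = j.val ∨ j.val + 1 = i.val
    | _, _ => False
  symm := by
    refine ⟨?_⟩
    intro a b h
    cases a <;> cases b <;> simp only [] at h ⊢ <;> tauto
  loopless := by
    refine ⟨?_⟩
    intro a h
    cases a <;> simp only [] at h <;> omega

/-- Index type for the trees attached in Corollary 2.5: `T₁, …, T_n` on the first path,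
`Λ₁, …, Λ_n` on the second path, and `Υ`, `Θ` at the hub vertices `t`, `r`. -/
abbrev Stmt5Index (n : ℕ) : Type := (Fin n ⊕ Fin n) ⊕ (Unit ⊕ Unit)

/-- The family of vertex types of the attached trees. -/
def stmt5W {n : ℕ} (WT WΛ : Fin n → Type) (WΥ WΘ : Type) : Stmt5Index n → Type :=
  Sum.elim (Sum.elim WT WΛ) (Sum.elim (fun _ => WΥ) (fun _ => WΘ))

/-- The family of attached trees. -/
def stmt5T {n : ℕ} {WT WΛ : Fin n → Type} {WΥ WΘ : Type}
    (TT : ∀ j, SimpleGraph (WT j)) (TΛ : ∀ j, SimpleGraph (WΛ j))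
    (TΥ : SimpleGraph WΥ) (TΘ : SimpleGraph WΘ) :
    ∀ i, SimpleGraph (stmt5W WT WΛ WΥ WΘ i) :=
  fun i =>
    match i with
    | .inl (.inl j) => TT j
    | .inl (.inr j) => TΛ j
    | .inr (.inl _) => TΥ
    | .inr (.inr _) => TΘ

/-- The family of roots of the attached trees. -/
def stmt5root {n : ℕ} {WT WΛ : Fin n → Type} {WΥ WΘ : Type}
    (tT : ∀ j, WT j) (tΛ : ∀ j, WΛ j) (tΥ : WΥ) (tΘ : WΘ) :
    ∀ i, stmt5W WT WΛ WΥ WΘ i :=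
  fun i =>
    match i with
    | .inl (.inl j) => tT j
    | .inl (.inr j) => tΛ j
    | .inr (.inl _) => tΥ
    | .inr (.inr _) => tΘ

/-- Attachment vertices on the theta graph with hub vertices `t = v` and `r = u`, paths
`S₁ : t–a₁–⋯–a_n–r`, `S₂ : t–b₁–⋯–b_n–r` and `S₃` of length `m + 1`: the tree `T_j` is
attached at `a_j`, `Λ_j` at `b_j`, `Υ` at `t` and `Θ` at `r`. -/
def stmt5x (n m : ℕ) : Stmt5Index n → ThetaV n n m :=
  fun i =>
    match i with
    | .inl (.inl j) => ThetaV.x1 j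
    | .inl (.inr j) => ThetaV.x2 j
    | .inr (.inl _) => ThetaV.v
    | .inr (.inr _) => ThetaV.u

/-- The bicyclic graph of Corollary 2.5. -/
def stmt5Graph (n m : ℕ) {WT WΛ : Fin n → Type} {WΥ WΘ : Type}
    (TT : ∀ j, SimpleGraph (WT j)) (TΛ : ∀ j, SimpleGraph (WΛ j))
    (TΥ : SimpleGraph WΥ) (TΘ : SimpleGraph WΘ)
    (tT : ∀ j, WT j) (tΛ : ∀ j, WΛ j) (tΥ : WΥ) (tΘ : WΘ) :=
  attachTrees (theta n n m) (stmt5T TT TΛ TΥ TΘ) (stmt5root tT tΛ tΥ tΘ) (stmt5x n m)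

theorem tree_closer_unique {W : Type} {T : SimpleGraph W} (hT : T.IsTree) (t w a b : W)
    (ha : T.Adj w a) (hb : T.Adj w b) (hda : T.dist t a ≤ T.dist t w)
    (hdb : T.dist t b ≤ T.dist t w) : a = b := by
  classical
  have key : ∀ a, T.Adj w a → T.dist t a ≤ T.dist t w →
      ∃ p : T.Walk t w, p.IsPath ∧ p.penultimate = a := by
    intro a ha hda
    obtain ⟨p, hp, hl⟩ := hT.1.exists_path_of_dist t a
    have hw : w ∉ p.support := by
      intro hw
      have h1 := p.length_takeUntil_lt_length hw ha.ne
      have h2 := SimpleGraph.dist_le (p.takeUntil w hw)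
      omega
    exact ⟨p.concat ha.symm, hp.concat hw ha.symm, by simp⟩
  obtain ⟨p, hp, hpa⟩ := key a ha hda
  obtain ⟨q, hq, hqb⟩ := key b hb hdb
  have := (hT.existsUnique_path t w).unique hp hq
  rw [← hpa, ← hqb, this]

/-- Bundle of rooted graphs over a base graph. -/
def bun {B : Type} (base : SimpleGraph B) {F : B → Type} (T : ∀ b, SimpleGraph (F b))
    (t : ∀ b, F b) : SimpleGraph (Σ b, F b) where
  Adj p q := (∃ b w w', p = ⟨b, w⟩ ∧ q = ⟨b, w'⟩ ∧ (T b).Adj w w') ∨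
    (∃ b b', p = ⟨b, t b⟩ ∧ q = ⟨b', t b'⟩ ∧ base.Adj b b')
  symm := by
    refine ⟨?_⟩
    rintro p q (⟨b, w, w', rfl, rfl, h⟩ | ⟨b, b', rfl, rfl, h⟩)
    · exact Or.inl ⟨b, w', w, rfl, rfl, h.symm⟩
    · exact Or.inr ⟨b', b, rfl, rfl, h.symm⟩
  loopless := by
    refine ⟨?_⟩
    rintro p (⟨b, w, w', rfl, h2, h⟩ | ⟨b, b', rfl, h2, h⟩)
    · cases h2
      exact h.ne rfl
    · cases h2
      exact h.ne rfl

section bundle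
variable {B : Type} {base : SimpleGraph B} {F : B → Type} {T : ∀ b, SimpleGraph (F b)}
    {t : ∀ b, F b}

theorem bun_fib {b : B} {w w' : F b} : (bun base T t).Adj ⟨b, w⟩ ⟨b, w'⟩ ↔ (T b).Adj w w' := by
  constructor
  · rintro (⟨c, x, x', h1, h2, h⟩ | ⟨c, c', h1, h2, h⟩)
    · cases h1
      cases h2
      exact h
    · have e1 : b = c := congrArg Sigma.fst h1
      have e2 : b = c' := congrArg Sigma.fst h2
      exact absurd (e1.symm.trans e2) h.ne
  · intro h
    exact Or.inl ⟨b, w, w', rfl, rfl, h⟩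

theorem bun_base {b b' : B} (hbb : b ≠ b') {w : F b} {w' : F b'} :
    (bun base T t).Adj ⟨b, w⟩ ⟨b', w'⟩ ↔ base.Adj b b' ∧ w = t b ∧ w' = t b' := by
  constructor
  · rintro (⟨c, x, x', h1, h2, h⟩ | ⟨c, c', h1, h2, h⟩)
    · cases h1
      cases h2
      exact absurd rfl hbb
    · cases h1
      cases h2
      exact ⟨h, rfl, rfl⟩
  · rintro ⟨h, rfl, rfl⟩
    exact Or.inr ⟨b, b', rfl, rfl, h⟩

theorem bun_root {b b' : B} :
    (bun base T t).Adj ⟨b, t b⟩ ⟨b', t b'⟩ ↔ base.Adj b b' := by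
  by_cases h : b = b'
  · subst h
    simp
  · simp [bun_base h]

theorem bun_nonroot {b : B} {w : F b} (hw : w ≠ t b) {q : Σ b, F b}
    (h : (bun base T t).Adj ⟨b, w⟩ q) : ∃ w', q = ⟨b, w'⟩ ∧ (T b).Adj w w' := by
  obtain ⟨c, x⟩ := q
  by_cases hc : b = c
  · subst hc
    exact ⟨x, rfl, bun_fib.1 h⟩
  · exact absurd ((bun_base hc).1 h).2.1 hw

theorem bun_aut_root [Finite B] (hT : ∀ b, (T b).IsTree)
    (h2 : ∀ b, ∃ c d, c ≠ d ∧ base.Adj b c ∧ base.Adj b d)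
    (f : bun base T t ≃g bun base T t) (b : B) : ∃ b', f ⟨b, t b⟩ = ⟨b', t b'⟩ := by
  let S : Set B := {b | (f ⟨b, t b⟩).2 ≠ t _}
  let D : (Σ b, F b) → ℕ := fun p => (T p.1).dist (t p.1) p.2
  have hS : S = ∅ := by
    by_contra hne
    have hne : S.Nonempty := Set.nonempty_iff_ne_empty.2 hne
    obtain ⟨a, haS, hmax⟩ := S.toFinite.exists_maximalFor
      (fun a => D (f ⟨a, t a⟩)) S hne
    obtain ⟨c, d, hcd, hc, hd⟩ := h2 a
    have key : ∀ c, base.Adj a c → ∃ w', f ⟨c, t c⟩ = ⟨(f ⟨a, t a⟩).1, w'⟩ ∧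
        (T (f ⟨a, t a⟩).1).Adj (f ⟨a, t a⟩).2 w' ∧
        (T (f ⟨a, t a⟩).1).dist (t _) w' ≤ (T (f ⟨a, t a⟩).1).dist (t _) (f ⟨a, t a⟩).2 := by
      intro c hc
      have hadj : (bun base T t).Adj ⟨(f ⟨a, t a⟩).1, (f ⟨a, t a⟩).2⟩ (f ⟨c, t c⟩) :=
        f.map_rel_iff.2 (bun_root.2 hc)
      obtain ⟨w', hw', hA⟩ := bun_nonroot haS hadj
      refine ⟨w', hw', hA, ?_⟩
      by_cases hr : w' = t _
      · rw [hr]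
        simp
      · have hcS : c ∈ S := by
          show (f ⟨c, t c⟩).2 ≠ t _
          rw [hw']
          exact hr
        have h5 : D (f ⟨c, t c⟩) ≤ D (f ⟨a, t a⟩) := by
          rcases le_total (D (f ⟨c, t c⟩)) (D (f ⟨a, t a⟩)) with h | h
          · exact h
          · exact hmax hcS h
        rw [hw'] at h5
        exact h5
    obtain ⟨w1, e1, A1, d1⟩ := key c hc
    obtain ⟨w2, e2, A2, d2⟩ := key d hd
    have := tree_closer_unique (hT _) _ _ _ _ A1 A2 d1 d2
    subst this
    have h3 := f.injective (e1.trans e2.symm)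
    exact hcd (congrArg Sigma.fst h3)
  have hb : b ∉ S := by simp [hS]
  have hb : (f ⟨b, t b⟩).2 = t _ := not_not.1 hb
  exact ⟨(f ⟨b, t b⟩).1, Sigma.ext rfl (heq_of_eq hb)⟩

theorem bun_aut_structure [Finite B] (hT : ∀ b, (T b).IsTree)
    (h2 : ∀ b, ∃ c d, c ≠ d ∧ base.Adj b c ∧ base.Adj b d)
    (f : bun base T t ≃g bun base T t) :
    ∃ (φ : base ≃g base) (g : ∀ b, T b ≃g T (φ b)), (∀ b, g b (t b) = t (φ b)) ∧
      ∀ b w, f ⟨b, w⟩ = ⟨φ b, g b w⟩ := by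
  choose p hp using bun_aut_root hT h2 f
  choose q hq using bun_aut_root hT h2 f.symm
  have hqp : ∀ b, q (p b) = b := by
    intro b
    have := hq (p b)
    rw [← hp b, RelIso.symm_apply_apply] at this
    exact (congrArg Sigma.fst this).symm
  have hpq : ∀ b, p (q b) = b := by
    intro b
    have := hp (q b)
    rw [← hq b, RelIso.apply_symm_apply] at this
    exact (congrArg Sigma.fst this).symm
  let φ : base ≃g base := ⟨⟨p, q, hqp, hpq⟩, by
    intro a b
    show base.Adj (p a) (p b) ↔ _
    rw [← bun_root (base := base) (T := T) (t := t), ← hp, ← hp, f.map_rel_iff, bun_root]⟩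
  have fib : ∀ (f : bun base T t ≃g bun base T t) b w,
      (f ⟨b, w⟩).1 = (f ⟨b, t b⟩).1 := by
    intro f b w
    choose q hq using bun_aut_root hT h2 f.symm
    have step : ∀ w w', (T b).Adj w w' → (f ⟨b, w⟩).1 = (f ⟨b, w'⟩).1 := by
      intro w w' h
      by_contra hne
      have hadj : (bun base T t).Adj ⟨(f ⟨b, w⟩).1, (f ⟨b, w⟩).2⟩ ⟨(f ⟨b, w'⟩).1, (f ⟨b, w'⟩).2⟩ :=
        f.map_rel_iff.2 (bun_fib.2 h)
      obtain ⟨-, e1, e2⟩ := (bun_base hne).1 hadj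
      have r : ∀ w, (f ⟨b, w⟩).2 = t _ → w = t b := by
        intro w e
        have h3 : f ⟨b, w⟩ = ⟨(f ⟨b, w⟩).1, t _⟩ := Sigma.ext rfl (heq_of_eq e)
        have h4 := hq (f ⟨b, w⟩).1
        rw [← h3, RelIso.symm_apply_apply] at h4
        generalize q (f ⟨b, w⟩).1 = z at h4
        cases h4
        rfl
      exact h.ne ((r w e1).trans (r w' e2).symm)
    obtain ⟨pw⟩ := (hT b).1 w (t b)
    have walk : ∀ w w', (T b).Walk w w' → (f ⟨b, w⟩).1 = (f ⟨b, w'⟩).1 := by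
      intro w w' pw
      induction pw with
      | nil => rfl
      | cons h _ ih => exact (step _ _ h).trans ih
    exact walk _ _ pw
  have ex : ∀ b w, ∃ w' : F (p b), f ⟨b, w⟩ = ⟨p b, w'⟩ := by
    intro b w
    have h1 := fib f b w
    rw [hp] at h1
    generalize f ⟨b, w⟩ = z at h1
    obtain ⟨z1, z2⟩ := z
    cases h1
    exact ⟨z2, rfl⟩
  choose g hg using ex
  have gbij : ∀ b, Function.Bijective (g b) := by
    intro b
    constructor
    · intro w w' h
      have : f ⟨b, w⟩ = f ⟨b, w'⟩ := by rw [hg, hg, h]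
      have := f.injective this
      cases this
      rfl
    · intro y
      have h1 := fib f.symm (p b) y
      rw [hq, hqp] at h1
      have h3 : f (f.symm ⟨p b, y⟩) = ⟨p b, y⟩ := RelIso.apply_symm_apply _ _
      generalize f.symm ⟨p b, y⟩ = z at h1 h3
      obtain ⟨z1, z2⟩ := z
      cases h1
      rw [hg] at h3
      refine ⟨z2, ?_⟩
      cases h3
      rfl
  refine ⟨φ, fun b => ⟨Equiv.ofBijective (g b) (gbij b), ?_⟩, ?_, ?_⟩
  · intro w w'
    show (T (p b)).Adj (g b w) (g b w') ↔ _
    rw [← bun_fib (base := base) (T := T) (t := t), ← hg, ← hg, f.map_rel_iff, bun_fib]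
  · intro b
    show g b (t b) = t (p b)
    have := (hg b (t b)).symm.trans (hp b)
    exact eq_of_heq (Sigma.mk.inj this).2
  · intro b w
    exact hg b w

end bundle

section thetaSection

theorem thetaV_finite (p q r : ℕ) : Finite (ThetaV p q r) := by
  let f : Unit ⊕ Unit ⊕ Fin p ⊕ Fin q ⊕ Fin r → ThetaV p q r := fun z =>
    match z with
    | .inl _ => .u
    | .inr (.inl _) => .v
    | .inr (.inr (.inl i)) => .x1 i
    | .inr (.inr (.inr (.inl i))) => .x2 i
    | .inr (.inr (.inr (.inr i))) => .x3 i
  refine Finite.of_surjective f ?_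
  rintro (_ | _ | i | i | i)
  · exact ⟨.inl (), rfl⟩
  · exact ⟨.inr (.inl ()), rfl⟩
  · exact ⟨.inr (.inr (.inl i)), rfl⟩
  · exact ⟨.inr (.inr (.inr (.inl i))), rfl⟩
  · exact ⟨.inr (.inr (.inr (.inr i))), rfl⟩

/-- Number of internal vertices of the paths. -/
def plen (n m : ℕ) (c : Fin 3) : ℕ := if c = 2 then m else n

/-- The vertex at distance `k` from `v` along path `c`. -/
def pvert (n m : ℕ) (c : Fin 3) (k : ℕ) : ThetaV n n m :=
  if k = 0 then .v
  else if c = 0 then (if h : k - 1 < n then .x1 ⟨k - 1, h⟩ else .u)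
  else if c = 1 then (if h : k - 1 < n then .x2 ⟨k - 1, h⟩ else .u)
  else (if h : k - 1 < m then .x3 ⟨k - 1, h⟩ else .u)

variable {n m : ℕ}

theorem pvert_zero (c : Fin 3) : pvert n m c 0 = .v := by simp [pvert]

theorem pvert_last (c : Fin 3) : pvert n m c (plen n m c + 1) = .u := by
  fin_cases c <;> simp [pvert, plen]

theorem pvert_eq_u (c : Fin 3) (k : ℕ) : pvert n m c k = .u ↔ plen n m c + 1 ≤ k := by
  fin_cases c <;> simp [pvert, plen] <;> split_ifs <;> simp <;> omega

theorem pvert_eq_v (c : Fin 3) (k : ℕ) : pvert n m c k = .v ↔ k = 0 := by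
  fin_cases c <;> simp [pvert] <;> split_ifs <;> simp

theorem pvert_inj (c d : Fin 3) (k l : ℕ) (h : pvert n m c k = pvert n m d l) (hk : 1 ≤ k)
    (hk' : k ≤ plen n m c) : c = d ∧ k = l := by
  have hl : l ≠ 0 := by
    rintro rfl
    rw [pvert_zero, pvert_eq_v] at h
    omega
  have hk0 : k ≠ 0 := by omega
  have h1 : k - 1 < plen n m c := by omega
  clear hk'
  fin_cases c <;> fin_cases d <;> simp [plen] at h1 <;> simp [pvert, hl, hk0] at h <;>
    rw [dif_pos h1] at h <;> split_ifs at h <;> simp at h <;> simp <;> omega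

theorem pvert_adj (hn : 0 < n) (c : Fin 3) (k : ℕ) (hk : k ≤ plen n m c) :
    (theta n n m).Adj (pvert n m c k) (pvert n m c (k + 1)) := by
  revert hk
  fin_cases c <;> simp [pvert, plen] <;> intro hk <;> split_ifs <;> simp [theta] <;> omega

theorem pvert_nbr (c : Fin 3) (k : ℕ) (hk : 1 ≤ k) (hk' : k ≤ plen n m c) (y : ThetaV n n m)
    (h : (theta n n m).Adj (pvert n m c k) y) :
    y = pvert n m c (k - 1) ∨ y = pvert n m c (k + 1) := by
  obtain ⟨k, rfl⟩ : ∃ j, k = j + 1 := ⟨k - 1, by omega⟩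
  revert h hk'
  fin_cases c <;> simp [pvert, plen] <;> intro hk' <;> 
    have hk2 : k < _ := hk' <;> simp only [hk2, dif_pos] <;>
    cases y <;> simp [theta] <;> intro h <;> split_ifs <;> simp [Fin.ext_iff] <;> omega

theorem v_nbr (hn : 0 < n) (y : ThetaV n n m) (h : (theta n n m).Adj .v y) :
    ∃ c, y = pvert n m c 1 := by
  cases y with
  | u =>
    simp [theta] at h
    refine ⟨2, ?_⟩
    simp [pvert]
    omega
  | v => simp [theta] at h
  | x1 i =>
    simp [theta] at h
    refine ⟨0, ?_⟩
    simp [pvert, hn, Fin.ext_iff, h]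
  | x2 i =>
    simp [theta] at h
    refine ⟨1, ?_⟩
    simp [pvert, hn, Fin.ext_iff, h]
  | x3 i =>
    simp [theta] at h
    refine ⟨2, ?_⟩
    have : 0 < m := by have := i.2; omega
    simp [pvert, this, Fin.ext_iff, h]

theorem vert_cases (y : ThetaV n n m) : y = .u ∨ y = .v ∨ ∃ c k, 1 ≤ k ∧ k ≤ plen n m c ∧
    y = pvert n m c k := by
  cases y with
  | u => simp
  | v => simp
  | x1 i => exact Or.inr (Or.inr ⟨0, i + 1, by omega, by simp [plen], by simp [pvert]⟩)
  | x2 i => exact Or.inr (Or.inr ⟨1, i + 1, by omega, by simp [plen], by simp [pvert]⟩)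
  | x3 i => exact Or.inr (Or.inr ⟨2, i + 1, by omega, by simp [plen], by simp [pvert]⟩)

theorem hub_iff (hn : 0 < n) (y : ThetaV n n m) : (∃ a b c, a ≠ b ∧ a ≠ c ∧ b ≠ c ∧
    (theta n n m).Adj y a ∧ (theta n n m).Adj y b ∧ (theta n n m).Adj y c) ↔
    (y = .u ∨ y = .v) := by
  constructor
  · rintro ⟨a, b, c, hab, hac, hbc, ha, hb, hc⟩
    rcases vert_cases y with h | h | ⟨d, k, hk, hk', rfl⟩
    · exact Or.inl h
    · exact Or.inr h
    · exfalso
      rcases pvert_nbr d k hk hk' a ha with h1 | h1 <;>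
      rcases pvert_nbr d k hk hk' b hb with h2 | h2 <;>
      rcases pvert_nbr d k hk hk' c hc with h3 | h3 <;> simp_all
  · rintro (rfl | rfl)
    · refine ⟨.x1 ⟨n - 1, by omega⟩, .x2 ⟨n - 1, by omega⟩,
        if h : 0 < m then .x3 ⟨m - 1, by omega⟩ else .v, ?_, ?_, ?_, ?_, ?_, ?_⟩ <;>
      (try split_ifs) <;> simp [theta] <;> omega
    · refine ⟨.x1 ⟨0, by omega⟩, .x2 ⟨0, by omega⟩,
        if h : 0 < m then .x3 ⟨0, by omega⟩ else .u, ?_, ?_, ?_, ?_, ?_, ?_⟩ <;>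
      (try split_ifs) <;> simp [theta] <;> omega

theorem theta_two_nbrs (hn : 0 < n) (y : ThetaV n n m) : ∃ c d, c ≠ d ∧
    (theta n n m).Adj y c ∧ (theta n n m).Adj y d := by
  rcases vert_cases y with h | h | ⟨d, k, hk, hk', rfl⟩
  · obtain ⟨a, b, c, hab, hac, hbc, ha, hb, hc⟩ := (hub_iff hn y).2 (Or.inl h)
    exact ⟨a, b, hab, ha, hb⟩
  · obtain ⟨a, b, c, hab, hac, hbc, ha, hb, hc⟩ := (hub_iff hn y).2 (Or.inr h)
    exact ⟨a, b, hab, ha, hb⟩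
  · have h1 := pvert_adj (m := m) hn d (k - 1) (by omega)
    rw [Nat.sub_add_cancel hk] at h1
    refine ⟨_, _, ?_, h1.symm, pvert_adj hn d k hk'⟩
    intro he
    by_cases hk1 : k = 1
    · subst hk1
      rw [Nat.sub_self, pvert_zero, eq_comm, pvert_eq_v] at he
      omega
    · have := (pvert_inj _ _ _ _ he (by omega) (by omega)).2
      omega

theorem theta_aut_hub (hn : 0 < n) (φ : theta n n m ≃g theta n n m) :
    (φ .u = .u ∧ φ .v = .v) ∨ (φ .u = .v ∧ φ .v = .u) := by
  have key : ∀ y, (y = .u ∨ y = .v) → (φ y = .u ∨ φ y = .v) := by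
    intro y hy
    obtain ⟨a, b, c, hab, hac, hbc, ha, hb, hc⟩ := (hub_iff hn y).2 hy
    exact (hub_iff hn _).1 ⟨φ a, φ b, φ c, φ.injective.ne hab, φ.injective.ne hac,
      φ.injective.ne hbc, φ.map_rel_iff.2 ha, φ.map_rel_iff.2 hb, φ.map_rel_iff.2 hc⟩
  have hne : φ .u ≠ φ .v := φ.injective.ne (by simp)
  rcases key .u (Or.inl rfl) with h1 | h1 <;> rcases key .v (Or.inr rfl) with h2 | h2
  · exact absurd (h1.trans h2.symm) hne
  · exact Or.inl ⟨h1, h2⟩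
  · exact Or.inr ⟨h1, h2⟩
  · exact absurd (h1.trans h2.symm) hne

theorem theta_aut_path (hn : 0 < n) (φ : theta n n m ≃g theta n n m) (hu : φ .u = .u)
    (hv : φ .v = .v) (c d : Fin 3) (h1 : φ (pvert n m c 1) = pvert n m d 1) :
    ∀ k, k ≤ plen n m c → φ (pvert n m c k) = pvert n m d k ∧
      φ (pvert n m c (k + 1)) = pvert n m d (k + 1) := by
  intro k
  induction k with
  | zero =>
    intro _
    simp only [pvert_zero, hv, Nat.zero_add, h1, and_self]
  | succ k ih =>
    intro hk
    obtain ⟨i1, i2⟩ := ih (by omega)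
    refine ⟨i2, ?_⟩
    have hd : k + 1 ≤ plen n m d := by
      by_contra hlt
      have : pvert n m d (k + 1) = .u := (pvert_eq_u _ _).2 (by omega)
      rw [this, ← hu] at i2
      have := (pvert_eq_u _ _).1 (φ.injective i2)
      omega
    have hadj := φ.map_rel_iff.2 (pvert_adj (m := m) hn c (k + 1) hk)
    rw [i2] at hadj
    rcases pvert_nbr d (k + 1) (by omega) hd _ hadj with h | h
    · exfalso
      rw [Nat.add_sub_cancel, ← i1] at h
      have h := φ.injective h
      by_cases hk0 : k = 0
      · subst hk0
        rw [pvert_zero, pvert_eq_v] at h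
        omega
      · have := (pvert_inj _ _ _ _ h.symm (by omega) (by omega)).2
        omega
    · exact h

theorem theta_aut_len (hn : 0 < n) (φ : theta n n m ≃g theta n n m) (hu : φ .u = .u)
    (hv : φ .v = .v) (c d : Fin 3) (h1 : φ (pvert n m c 1) = pvert n m d 1)
    (hc : 0 < plen n m c) : plen n m c = plen n m d := by
  obtain ⟨h2, h3⟩ := theta_aut_path hn φ hu hv c d h1 _ le_rfl
  rw [pvert_last, hu, eq_comm, pvert_eq_u] at h3
  by_contra hne
  have h4 : pvert n m d (plen n m c) = .u := (pvert_eq_u _ _).2 (by omega)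
  rw [h4, ← hu] at h2
  have := (pvert_eq_u _ _).1 (φ.injective h2)
  omega

theorem theta_aut_perm (hn : 0 < n) (φ : theta n n m ≃g theta n n m) (hu : φ .u = .u)
    (hv : φ .v = .v)
    (hex : m = n → ∃ j, ∀ k, φ (.x1 j) ≠ .x3 k ∧ φ (.x2 j) ≠ .x3 k) :
    (∀ k, φ (.x3 k) = .x3 k) ∧
    (((∀ j, φ (.x1 j) = .x1 j) ∧ (∀ j, φ (.x2 j) = .x2 j)) ∨
     ((∀ j, φ (.x1 j) = .x2 j) ∧ (∀ j, φ (.x2 j) = .x1 j))) := by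
  have ex : ∀ c, ∃ d, φ (pvert n m c 1) = pvert n m d 1 := by
    intro c
    apply v_nbr hn
    have := φ.map_rel_iff.2 (pvert_adj (m := m) hn c 0 (by omega))
    rwa [pvert_zero, hv] at this
  choose s hs using ex
  have e1 : ∀ j : Fin n, pvert n m 0 (j + 1) = .x1 j := by intro j; simp [pvert]
  have e2 : ∀ j : Fin n, pvert n m 1 (j + 1) = .x2 j := by intro j; simp [pvert]
  have e3 : ∀ j : Fin m, pvert n m 2 (j + 1) = .x3 j := by intro j; simp [pvert]
  have path : ∀ c k, k < plen n m c → φ (pvert n m c (k + 1)) = pvert n m (s c) (k + 1) :=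
    fun c k hk => (theta_aut_path hn φ hu hv c (s c) (hs c) k hk.le).2
  have len : ∀ c, 0 < plen n m c → plen n m c = plen n m (s c) :=
    fun c => theta_aut_len hn φ hu hv c (s c) (hs c)
  have l0 : plen n m 0 = n := by simp [plen]
  have l1 : plen n m 1 = n := by simp [plen]
  have l2 : plen n m 2 = m := by simp [plen]
  have p0 : ∀ j : Fin n, φ (.x1 j) = pvert n m (s 0) (j + 1) := by
    intro j
    rw [← e1]
    exact path 0 j (by rw [l0]; exact j.2)
  have p1 : ∀ j : Fin n, φ (.x2 j) = pvert n m (s 1) (j + 1) := by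
    intro j
    rw [← e2]
    exact path 1 j (by rw [l1]; exact j.2)
  have p2 : ∀ j : Fin m, φ (.x3 j) = pvert n m (s 2) (j + 1) := by
    intro j
    rw [← e3]
    exact path 2 j (by rw [l2]; exact j.2)
  have s0 : s 0 ≠ 2 := by
    intro h
    have := len 0 (by omega)
    rw [h, l0, l2] at this
    obtain ⟨j, hj⟩ := hex this.symm
    refine (hj ⟨j, by omega⟩).1 ?_
    rw [p0, h, ← e3]
  have s1 : s 1 ≠ 2 := by
    intro h
    have := len 1 (by omega)
    rw [h, l1, l2] at this
    obtain ⟨j, hj⟩ := hex this.symm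
    refine (hj ⟨j, by omega⟩).2 ?_
    rw [p1, h, ← e3]
  have sinj : ∀ c d, 0 < plen n m c → s c = s d → c = d := by
    intro c d hc h
    have := (hs c).trans ((congrArg (fun z => pvert n m z 1) h).trans (hs d).symm)
    exact (pvert_inj _ _ _ _ (φ.injective this) le_rfl hc).1
  have s01 : s 0 ≠ s 1 := fun h => absurd (sinj 0 1 (by omega) h) (by decide)
  have s02 : s 0 ≠ s 2 := fun h => absurd (sinj 0 2 (by omega) h) (by decide)
  have s12 : s 1 ≠ s 2 := fun h => absurd (sinj 1 2 (by omega) h) (by decide)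
  have hcases : s 2 = 2 ∧ ((s 0 = 0 ∧ s 1 = 1) ∨ (s 0 = 1 ∧ s 1 = 0)) := by omega
  obtain ⟨h2, h | h⟩ := hcases
  · refine ⟨fun k => by rw [p2, h2, e3], Or.inl ⟨fun k => ?_, fun k => ?_⟩⟩
    · rw [p0, h.1, e1]
    · rw [p1, h.2, e2]
  · refine ⟨fun k => by rw [p2, h2, e3], Or.inr ⟨fun k => ?_, fun k => ?_⟩⟩
    · rw [p0, h.1, e2]
    · rw [p1, h.2, e1]

end thetaSection

section wreathSection
variable {G : Type} [Group G]

/-- The pair component. -/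
def wl (a : wreathZ2 G) : G × G := SemidirectProduct.left a

/-- Whether the swap component is nontrivial. -/
def sw (a : wreathZ2 G) : Bool := decide (Multiplicative.toAdd (SemidirectProduct.right a) = 1)

/-- Build an element of the wreath product. -/
def wmk (g : G × G) (s : Bool) : wreathZ2 G :=
  SemidirectProduct.mk g (Multiplicative.ofAdd (if s then 1 else 0))

theorem wl_wmk (g : G × G) (s : Bool) : wl (wmk g s) = g := rfl

theorem sw_wmk (g : G × G) (s : Bool) : sw (wmk g s) = s := by
  cases s
  · show decide ((0 : ZMod 2) = 1) = false
    decide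
  · show decide ((1 : ZMod 2) = 1) = true
    decide

theorem wl_one : wl (1 : wreathZ2 G) = 1 := rfl

theorem sw_one : sw (1 : wreathZ2 G) = false := by
  show decide ((0 : ZMod 2) = 1) = false
  decide

theorem sw_mul (a b : wreathZ2 G) : sw (a * b) = xor (sw a) (sw b) := by
  have h : ∀ x y : ZMod 2, decide (x + y = 1) = xor (decide (x = 1)) (decide (y = 1)) := by decide
  exact h _ _

theorem wl_mul (a b : wreathZ2 G) :
    wl (a * b) = wl a * (if sw a then (wl b).swap else wl b) := by
  show wl a * (swapHom G (SemidirectProduct.right a)) (wl b) = _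
  congr 1
  by_cases h : Multiplicative.toAdd (SemidirectProduct.right a) = 1
  · simp only [sw, swapHom, MonoidHom.coe_mk, OneHom.coe_mk, h, if_true, decide_true]
    rfl
  · simp only [sw, swapHom, MonoidHom.coe_mk, OneHom.coe_mk, h, if_false, decide_false]
    rfl

theorem wreath_ext {a b : wreathZ2 G} (h1 : wl a = wl b) (h2 : sw a = sw b) : a = b := by
  refine SemidirectProduct.ext h1 ?_
  have h : ∀ x y : ZMod 2, decide (x = 1) = decide (y = 1) → x = y := by decide
  exact h _ _ h2

end wreathSection

section model
variable {n m : ℕ} {WT : Fin n → Type} {WΥ WΘ : Type}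

/-- Fibres of the model. -/
def fibF (m : ℕ) (WT : Fin n → Type) (WΥ WΘ : Type) : ThetaV n n m → Type
  | .u => WΘ
  | .v => WΥ
  | .x1 j => WT j
  | .x2 j => WT j
  | .x3 _ => Unit

/-- Trees of the model. -/
def fibT (m : ℕ) (TT : ∀ j, SimpleGraph (WT j)) (TΥ : SimpleGraph WΥ) (TΘ : SimpleGraph WΘ) :
    ∀ b, SimpleGraph (fibF m WT WΥ WΘ b)
  | .u => TΘ
  | .v => TΥ
  | .x1 j => TT j
  | .x2 j => TT j
  | .x3 _ => (⊥ : SimpleGraph Unit)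

/-- Roots of the model. -/
def fibt (m : ℕ) (tT : ∀ j, WT j) (tΥ : WΥ) (tΘ : WΘ) : ∀ b, fibF m WT WΥ WΘ b
  | .u => tΘ
  | .v => tΥ
  | .x1 j => tT j
  | .x2 j => tT j
  | .x3 _ => ()

variable {TT : ∀ j, SimpleGraph (WT j)} {TΥ : SimpleGraph WΥ} {TΘ : SimpleGraph WΘ}
  {tT : ∀ j, WT j} {tΥ : WΥ} {tΘ : WΘ}

theorem fibT_tree (hT : ∀ j, (TT j).IsTree) (hΥ : TΥ.IsTree) (hΘ : TΘ.IsTree) :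
    ∀ b, (fibT m TT TΥ TΘ b).IsTree
  | .u => hΘ
  | .v => hΥ
  | .x1 j => hT j
  | .x2 j => hT j
  | .x3 _ => by
    show (⊥ : SimpleGraph Unit).IsTree
    refine ⟨?_, SimpleGraph.isAcyclic_bot⟩
    exact ⟨fun a b => by cases a; cases b; exact SimpleGraph.Reachable.refl _⟩

/-- The action on vertices of the model. -/
def act (q : ↥(autStab TΥ tΥ) × ↥(autStab TΘ tΘ) × wreathZ2 (∀ j, ↥(autStab (TT j) (tT j)))) :
    (Σ b, fibF m WT WΥ WΘ b) → (Σ b, fibF m WT WΥ WΘ b)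
  | ⟨.u, w⟩ => ⟨.u, (q.2.1.1 : TΘ ≃g TΘ) w⟩
  | ⟨.v, w⟩ => ⟨.v, (q.1.1 : TΥ ≃g TΥ) w⟩
  | ⟨.x1 j, w⟩ => if sw q.2.2 then ⟨.x2 j, ((wl q.2.2).2 j).1 w⟩ else ⟨.x1 j, ((wl q.2.2).1 j).1 w⟩
  | ⟨.x2 j, w⟩ => if sw q.2.2 then ⟨.x1 j, ((wl q.2.2).1 j).1 w⟩ else ⟨.x2 j, ((wl q.2.2).2 j).1 w⟩
  | ⟨.x3 k, w⟩ => ⟨.x3 k, w⟩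

theorem act_one (z : Σ b, fibF m WT WΥ WΘ b) :
    act (TT := TT) (TΥ := TΥ) (TΘ := TΘ) (tT := tT) (tΥ := tΥ) (tΘ := tΘ) 1 z = z := by
  obtain ⟨_ | _ | j | j | k, w⟩ := z
  · rfl
  · rfl
  · simp [act, sw_one, wl_one] <;> rfl
  · simp [act, sw_one, wl_one] <;> rfl
  · rfl

theorem act_mul
    (p q : ↥(autStab TΥ tΥ) × ↥(autStab TΘ tΘ) × wreathZ2 (∀ j, ↥(autStab (TT j) (tT j))))
    (z : Σ b, fibF m WT WΥ WΘ b) : act (p * q) z = act p (act q z) := by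
  obtain ⟨_ | _ | j | j | k, w⟩ := z
  · rfl
  · rfl
  · cases hp : sw p.2.2 <;> cases hq : sw q.2.2 <;> simp [act, sw_mul, wl_mul, hp, hq] <;> rfl
  · cases hp : sw p.2.2 <;> cases hq : sw q.2.2 <;> simp [act, sw_mul, wl_mul, hp, hq] <;> rfl
  · rfl

/-- Base map of the action. -/
def sbase (s : Bool) : ThetaV n n m → ThetaV n n m
  | .u => .u
  | .v => .v
  | .x1 j => if s then .x2 j else .x1 j
  | .x2 j => if s then .x1 j else .x2 j
  | .x3 k => .x3 k

theorem sbase_adj (s : Bool) (a b : ThetaV n n m) (h : (theta n n m).Adj a b) :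
    (theta n n m).Adj (sbase s a) (sbase s b) := by
  cases s <;> cases a <;> cases b <;> simp_all [sbase, theta]

theorem act_root
    (q : ↥(autStab TΥ tΥ) × ↥(autStab TΘ tΘ) × wreathZ2 (∀ j, ↥(autStab (TT j) (tT j))))
    (b : ThetaV n n m) : act q ⟨b, fibt m tT tΥ tΘ b⟩ =
      ⟨sbase (sw q.2.2) b, fibt m tT tΥ tΘ (sbase (sw q.2.2) b)⟩ := by
  have hT : ∀ j (x : ↥(autStab (TT j) (tT j))), x.1 (tT j) = tT j := fun j x => x.2
  have h1 : q.1.1 tΥ = tΥ := q.1.2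
  have h2 : q.2.1.1 tΘ = tΘ := q.2.1.2
  cases b <;> cases hq : sw q.2.2 <;> simp [act, sbase, hq, fibt, hT, h1, h2]

theorem act_fib
    (q : ↥(autStab TΥ tΥ) × ↥(autStab TΘ tΘ) × wreathZ2 (∀ j, ↥(autStab (TT j) (tT j))))
    (b : ThetaV n n m) (w w' : fibF m WT WΥ WΘ b) (h : (fibT m TT TΥ TΘ b).Adj w w') :
    (bun (theta n n m) (fibT m TT TΥ TΘ) (fibt m tT tΥ tΘ)).Adj (act q ⟨b, w⟩) (act q ⟨b, w'⟩) := by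
  cases b with
  | u => exact bun_fib.2 (q.2.1.1.map_rel_iff.2 h)
  | v => exact bun_fib.2 (q.1.1.map_rel_iff.2 h)
  | x1 j =>
    cases hq : sw q.2.2 <;> simp only [act, hq, if_true, if_false, Bool.false_eq_true]
    · exact bun_fib.2 (((wl q.2.2).1 j).1.map_rel_iff.2 h)
    · exact bun_fib.2 (((wl q.2.2).2 j).1.map_rel_iff.2 h)
  | x2 j =>
    cases hq : sw q.2.2 <;> simp only [act, hq, if_true, if_false, Bool.false_eq_true]
    · exact bun_fib.2 (((wl q.2.2).2 j).1.map_rel_iff.2 h)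
    · exact bun_fib.2 (((wl q.2.2).1 j).1.map_rel_iff.2 h)
  | x3 k => exact bun_fib.2 h

theorem act_adj
    (q : ↥(autStab TΥ tΥ) × ↥(autStab TΘ tΘ) × wreathZ2 (∀ j, ↥(autStab (TT j) (tT j))))
    (x y : Σ b, fibF m WT WΥ WΘ b)
    (h : (bun (theta n n m) (fibT m TT TΥ TΘ) (fibt m tT tΥ tΘ)).Adj x y) :
    (bun (theta n n m) (fibT m TT TΥ TΘ) (fibt m tT tΥ tΘ)).Adj (act q x) (act q y) := by
  rcases h with ⟨b, w, w', rfl, rfl, h⟩ | ⟨b, b', rfl, rfl, h⟩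
  · exact act_fib q b w w' h
  · rw [act_root, act_root, bun_root]
    exact sbase_adj _ _ _ h

/-- The action as a homomorphism. -/
def actHom : ↥(autStab TΥ tΥ) × ↥(autStab TΘ tΘ) × wreathZ2 (∀ j, ↥(autStab (TT j) (tT j))) →*
    (bun (theta n n m) (fibT m TT TΥ TΘ) (fibt m tT tΥ tΘ) ≃g
      bun (theta n n m) (fibT m TT TΥ TΘ) (fibt m tT tΥ tΘ)) where
  toFun q := ⟨⟨act q, act q⁻¹, fun z => by rw [← act_mul, inv_mul_cancel, act_one],
    fun z => by rw [← act_mul, mul_inv_cancel, act_one]⟩, by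
      intro x y
      refine ⟨fun h => ?_, act_adj q x y⟩
      have h2 := act_adj q⁻¹ _ _ h
      change (bun _ _ _).Adj (act q⁻¹ (act q x)) (act q⁻¹ (act q y)) at h2
      rwa [← act_mul, ← act_mul, inv_mul_cancel, act_one, act_one] at h2⟩
  map_one' := by
    ext z : 1
    exact act_one z
  map_mul' p q := by
    ext z : 1
    exact act_mul p q z

theorem actHom_apply
    (q : ↥(autStab TΥ tΥ) × ↥(autStab TΘ tΘ) × wreathZ2 (∀ j, ↥(autStab (TT j) (tT j))))
    (z : Σ b, fibF m WT WΥ WΘ b) : actHom q z = act q z := rfl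

theorem actHom_injective (hn : 0 < n) : Function.Injective
    (actHom (m := m) (TT := TT) (TΥ := TΥ) (TΘ := TΘ) (tT := tT) (tΥ := tΥ) (tΘ := tΘ)) := by
  intro p q h
  have h : ∀ z, act p z = act q z := fun z => by
    rw [← actHom_apply, ← actHom_apply, h]
  have hs : sw p.2.2 = sw q.2.2 := by
    have h1 := h ⟨.x1 ⟨0, hn⟩, tT _⟩
    cases hp : sw p.2.2 <;> cases hq : sw q.2.2 <;> simp [act, hp, hq] at h1 ⊢ <;>
      exact absurd (congrArg Sigma.fst h1) (by simp)
  have e1 : p.1 = q.1 := by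
    apply Subtype.ext
    ext w
    have h1 := h ⟨.v, w⟩
    exact eq_of_heq (Sigma.mk.inj h1).2
  have e2 : p.2.1 = q.2.1 := by
    apply Subtype.ext
    ext w
    have h1 := h ⟨.u, w⟩
    exact eq_of_heq (Sigma.mk.inj h1).2
  have e3 : wl p.2.2 = wl q.2.2 := by
    cases hp : sw p.2.2
    · have hq := hs.symm.trans hp
      refine Prod.ext (funext fun j => Subtype.ext ?_) (funext fun j => Subtype.ext ?_)
      · ext w
        have h1 := h ⟨.x1 j, w⟩
        simp only [act, hp, hq] at h1
        exact eq_of_heq (Sigma.mk.inj h1).2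
      · ext w
        have h1 := h ⟨.x2 j, w⟩
        simp only [act, hp, hq] at h1
        exact eq_of_heq (Sigma.mk.inj h1).2
    · have hq := hs.symm.trans hp
      refine Prod.ext (funext fun j => Subtype.ext ?_) (funext fun j => Subtype.ext ?_)
      · ext w
        have h1 := h ⟨.x2 j, w⟩
        simp only [act, hp, hq] at h1
        exact eq_of_heq (Sigma.mk.inj h1).2
      · ext w
        have h1 := h ⟨.x1 j, w⟩
        simp only [act, hp, hq] at h1
        exact eq_of_heq (Sigma.mk.inj h1).2
  exact Prod.ext e1 (Prod.ext e2 (wreath_ext e3 hs))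

theorem actHom_surjective (hn : 0 < n) (hT : ∀ j, (TT j).IsTree) (hΥ : TΥ.IsTree)
    (hΘ : TΘ.IsTree) (hne : ∀ e : TΥ ≃g TΘ, e tΥ ≠ tΘ)
    (hside : m + 1 ≠ n + 1 ∨ ∃ j, Nontrivial (WT j)) : Function.Surjective
    (actHom (m := m) (TT := TT) (TΥ := TΥ) (TΘ := TΘ) (tT := tT) (tΥ := tΥ) (tΘ := tΘ)) := by
  intro f
  haveI := thetaV_finite n n m
  obtain ⟨φ, g, hg, hf⟩ := bun_aut_structure (fibT_tree hT hΥ hΘ) (theta_two_nbrs hn) f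
  have tr : ∀ b b', φ b = b' → ∃ e : fibT m TT TΥ TΘ b ≃g fibT m TT TΥ TΘ b',
      e (fibt m tT tΥ tΘ b) = fibt m tT tΥ tΘ b' ∧ ∀ w, f ⟨b, w⟩ = ⟨b', e w⟩ := by
    rintro b _ rfl
    exact ⟨g b, hg b, hf b⟩
  have hub : φ .u = .u ∧ φ .v = .v := by
    rcases theta_aut_hub hn φ with h | h
    · exact h
    · obtain ⟨e, he, -⟩ := tr _ _ h.2
      exact absurd he (hne e)
  have notriv : ∀ j, Nontrivial (WT j) → ¬ Nonempty (WT j ≃ Unit) := by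
    rintro j hj ⟨e⟩
    obtain ⟨x, y, hxy⟩ := hj
    exact hxy (e.injective rfl)
  obtain ⟨h3, h12⟩ := theta_aut_perm hn φ hub.1 hub.2 (by
    intro hmn
    rcases hside with h | ⟨j, hj⟩
    · exact absurd (by rw [hmn]) h
    · refine ⟨j, fun k => ⟨fun h => ?_, fun h => ?_⟩⟩
      · obtain ⟨e, -⟩ := tr _ _ h
        exact notriv j hj ⟨e.toEquiv⟩
      · obtain ⟨e, -⟩ := tr _ _ h
        exact notriv j hj ⟨e.toEquiv⟩)
  obtain ⟨eu, hu1, hu2⟩ := tr _ _ hub.1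
  obtain ⟨ev, hv1, hv2⟩ := tr _ _ hub.2
  have hx3 : ∀ k w, f ⟨.x3 k, w⟩ = ⟨.x3 k, w⟩ := by
    intro k w
    obtain ⟨e, -, he⟩ := tr _ _ (h3 k)
    rw [he]
    rfl
  rcases h12 with ⟨h1, h2⟩ | ⟨h1, h2⟩
  · choose e1 e1r e1f using fun j => tr _ _ (h1 j)
    choose e2 e2r e2f using fun j => tr _ _ (h2 j)
    refine ⟨(⟨ev, hv1⟩, ⟨eu, hu1⟩, wmk (fun j => ⟨e1 j, e1r j⟩, fun j => ⟨e2 j, e2r j⟩) false), ?_⟩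
    ext z : 1
    rw [actHom_apply]
    obtain ⟨_ | _ | j | j | k, w⟩ := z
    · exact (hu2 w).symm
    · exact (hv2 w).symm
    · rw [e1f]
      simp only [act, sw_wmk, wl_wmk]
      rfl
    · rw [e2f]
      simp only [act, sw_wmk, wl_wmk]
      rfl
    · exact (hx3 k w).symm
  · choose e1 e1r e1f using fun j => tr _ _ (h1 j)
    choose e2 e2r e2f using fun j => tr _ _ (h2 j)
    refine ⟨(⟨ev, hv1⟩, ⟨eu, hu1⟩, wmk (fun j => ⟨e2 j, e2r j⟩, fun j => ⟨e1 j, e1r j⟩) true), ?_⟩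
    ext z : 1
    rw [actHom_apply]
    obtain ⟨_ | _ | j | j | k, w⟩ := z
    · exact (hu2 w).symm
    · exact (hv2 w).symm
    · rw [e1f]
      simp only [act, sw_wmk, wl_wmk]
      rfl
    · rw [e2f]
      simp only [act, sw_wmk, wl_wmk]
      rfl
    · exact (hx3 k w).symm

end model

theorem attach_iso_bun {B : Type} (base : SimpleGraph B) {ι : Type} {W : ι → Type}
    (T : ∀ i, SimpleGraph (W i)) (t : ∀ i, W i) (x : ι → B) (hx : Function.Injective x)
    {F : B → Type} (T' : ∀ b, SimpleGraph (F b)) (t' : ∀ b, F b)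
    (γ : ∀ i, T i ≃g T' (x i)) (hγ : ∀ i, γ i (t i) = t' (x i))
    (hcov : ∀ b (w : F b), w ≠ t' b → ∃ i, x i = b) :
    Nonempty (attachTrees base T t x ≃g bun base T' t') := by
  let f : (B ⊕ Σ i, {w : W i // w ≠ t i}) → Σ b, F b :=
    Sum.elim (fun b => ⟨b, t' b⟩) (fun p => ⟨x p.1, γ p.1 p.2.1⟩)
  have hnr : ∀ i (w : {w : W i // w ≠ t i}), γ i w.1 ≠ t' (x i) := by
    intro i w h
    rw [← hγ] at h
    exact w.2 ((γ i).injective h)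
  have finj : Function.Injective f := by
    rintro (b | ⟨i, w⟩) (c | ⟨j, w'⟩) h
    · exact congrArg Sum.inl (congrArg Sigma.fst h)
    · exfalso
      have h1 : b = x j := congrArg Sigma.fst h
      subst h1
      exact hnr j w' (eq_of_heq (Sigma.mk.inj h).2).symm
    · exfalso
      have h1 : x i = c := congrArg Sigma.fst h
      subst h1
      exact hnr i w (eq_of_heq (Sigma.mk.inj h).2)
    · have h1 : i = j := hx (congrArg Sigma.fst h)
      subst h1
      have h2 : w.1 = w'.1 := (γ i).injective (eq_of_heq (Sigma.mk.inj h).2)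
      rw [Subtype.ext h2]
  have fsurj : Function.Surjective f := by
    rintro ⟨b, w⟩
    by_cases hw : w = t' b
    · exact ⟨.inl b, by rw [hw]; rfl⟩
    · obtain ⟨i, rfl⟩ := hcov b w hw
      refine ⟨.inr ⟨i, ⟨(γ i).symm w, ?_⟩⟩, ?_⟩
      · intro h
        apply hw
        rw [← hγ, ← h, RelIso.apply_symm_apply]
      · show (⟨x i, γ i ((γ i).symm w)⟩ : Σ b, F b) = _
        rw [RelIso.apply_symm_apply]
  have mixed : ∀ b i (w : {w : W i // w ≠ t i}),
      (bun base T' t').Adj ⟨b, t' b⟩ ⟨x i, γ i w.1⟩ ↔ b = x i ∧ (T i).Adj (t i) w.1 := by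
    intro b i w
    by_cases h : b = x i
    · subst h
      rw [bun_fib, ← hγ, (γ i).map_rel_iff]
      simp
    · rw [bun_base h]
      simp [h, hnr]
  refine ⟨⟨Equiv.ofBijective f ⟨finj, fsurj⟩, ?_⟩⟩
  rintro (b | ⟨i, w⟩) (c | ⟨j, w'⟩)
  · exact bun_root
  · exact mixed b j w'
  · exact ((bun base T' t').adj_comm _ _).trans (mixed c i w)
  · show (bun base T' t').Adj ⟨x i, γ i w.1⟩ ⟨x j, γ j w'.1⟩ ↔
      ∃ h : i = j, (T j).Adj (h ▸ w).1 w'.1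
    by_cases h : i = j
    · subst h
      rw [bun_fib, (γ i).map_rel_iff]
      simp
    · rw [bun_base (hx.ne h)]
      simp [h, hnr]

theorem aut_congr {V V' : Type} {G : SimpleGraph V} {G' : SimpleGraph V'} (e : G ≃g G') :
    Nonempty ((G ≃g G) ≃* (G' ≃g G')) := by
  refine ⟨⟨⟨fun f => (e.symm.trans f).trans e, fun f => (e.trans f).trans e.symm, ?_, ?_⟩, ?_⟩⟩
  · intro f
    ext z : 1
    simp
  · intro f
    ext z : 1
    simp
  · intro f g
    ext z : 1
    simp [RelIso.mul_apply]

/-- Corollary 2.5. With `T_i ≅ Λ_i` as rooted trees for each `i`,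
`Υ ≇ Θ` as rooted trees, and `ℓ ≠ n + 1` or some `T_i` nontrivial, the automorphism group
of `Δ` is `H × K × ((G₁ × ⋯ × G_n) ≀ Z₂)` where `G_i = Aut(T_i)_root`, `H = Aut(Υ)_root`
and `K = Aut(Θ)_root`. -/
theorem aut_bicyclic_link_type_general
    (n : ℕ) (hn : 0 < n) (m : ℕ)
    {WT WΛ : Fin n → Type} {WΥ WΘ : Type}
    [∀ j, Fintype (WT j)] [∀ j, Fintype (WΛ j)] [Fintype WΥ] [Fintype WΘ]
    (TT : ∀ j, SimpleGraph (WT j)) (TΛ : ∀ j, SimpleGraph (WΛ j))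
    (TΥ : SimpleGraph WΥ) (TΘ : SimpleGraph WΘ)
    (tT : ∀ j, WT j) (tΛ : ∀ j, WΛ j) (tΥ : WΥ) (tΘ : WΘ)
    (hTtree : ∀ j, (TT j).IsTree) (hΛtree : ∀ j, (TΛ j).IsTree)
    (hΥtree : TΥ.IsTree) (hΘtree : TΘ.IsTree)
    (hiso : ∀ j, ∃ e : TT j ≃g TΛ j, e (tT j) = tΛ j)
    (hne : ∀ e : TΥ ≃g TΘ, e tΥ ≠ tΘ)
    (hside : m + 1 ≠ n + 1 ∨ ∃ j, Nontrivial (WT j)) :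
    Nonempty ((stmt5Graph n m TT TΛ TΥ TΘ tT tΛ tΥ tΘ ≃g
        stmt5Graph n m TT TΛ TΥ TΘ tT tΛ tΥ tΘ) ≃*
      ↥(autStab TΥ tΥ) × ↥(autStab TΘ tΘ) ×
        wreathZ2 (∀ j, ↥(autStab (TT j) (tT j)))) := by
  choose e he using hiso
  have hx : Function.Injective (stmt5x n m) := by
    rintro ((i | i) | (i | i)) ((j | j) | (j | j)) h <;> simp_all [stmt5x]
  let γ : ∀ i, stmt5T TT TΛ TΥ TΘ i ≃g fibT m TT TΥ TΘ (stmt5x n m i) := fun i =>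
    match i with
    | .inl (.inl _) => RelIso.refl _
    | .inl (.inr j) => (e j).symm
    | .inr (.inl _) => RelIso.refl _
    | .inr (.inr _) => RelIso.refl _
  have hγ : ∀ i, γ i (stmt5root tT tΛ tΥ tΘ i) = fibt m tT tΥ tΘ (stmt5x n m i) := by
    rintro ((j | j) | (j | j))
    · rfl
    · show (e j).symm (tΛ j) = tT j
      rw [← he, RelIso.symm_apply_apply]
    · rfl
    · rfl
  obtain ⟨E⟩ := attach_iso_bun (theta n n m) (stmt5T TT TΛ TΥ TΘ) (stmt5root tT tΛ tΥ tΘ)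
    (stmt5x n m) hx (fibT m TT TΥ TΘ) (fibt m tT tΥ tΘ) γ hγ (by
      rintro (_ | _ | j | j | k) w hw
      · exact ⟨.inr (.inr ()), rfl⟩
      · exact ⟨.inr (.inl ()), rfl⟩
      · exact ⟨.inl (.inl j), rfl⟩
      · exact ⟨.inl (.inr j), rfl⟩
      · exact absurd rfl hw)
  obtain ⟨Φ⟩ := aut_congr E
  exact ⟨Φ.trans (MulEquiv.ofBijective actHom ⟨actHom_injective hn,
    actHom_surjective hn hTtree hΥtree hΘtree hne hside⟩).symm⟩
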